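/- Let ρ be a probability distribution on a countable set R, let M be a deterministic function taking an input and a tape r ∈ R to an output in a set Z, and let D, D' be two inputs such that M(D; R) ≈_{ε,δ} M(D'; R) for R ∼ ρ. Then there exists a joint distribution of a pair (R, R') on R × R such that: the marginal distribution of R equals ρ; the marginal distribution of R' is (ε,δ)-indistinguishable from ρ; and M(D; R) = M(D'; R') with probability at least 1 − δ. -/

import Mathlib

/-!
Write `P` and `Q` for the output laws of `M D` and `M D'`, and let `K z` be `ρ` conditioned on
`M D' = z`. Sample `R ∼ ρ` and then `R' ∼ K (M D R)`. The law of `R'` is `P.bind K`, while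
`ρ = Q.bind K` by total probability: both are images of the output laws under the same kernel `K`,
so indistinguishability of `P` and `Q` passes to `R'` and `ρ` by the data processing inequality.
The outputs agree unless `M D R` is a null outcome of `Q`, and the null outcomes of `Q` have mass at
most `δ` under `P`.
-/

open scoped ENNReal

/-- `(ε,δ)`-indistinguishability of two probability mass functions on a countable set:
for every event `E`, `P(E) ≤ e^ε·Q(E) + δ` and `Q(E) ≤ e^ε·P(E) + δ`. -/
def pmfIndist {X : Type*} (ε δ : ℝ) (P Q : PMF X) : Prop :=
  ∀ E : Set X,
    P.toOuterMeasure E ≤ ENNReal.ofReal (Real.exp ε) * Q.toOuterMeasure E + ENNReal.ofReal δ ∧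
    Q.toOuterMeasure E ≤ ENNReal.ofReal (Real.exp ε) * P.toOuterMeasure E + ENNReal.ofReal δ

lemma tsum_tsub_le_of_forall_tsum_indicator_le {X : Type*} {p q : X → ℝ≥0∞} {d : ℝ≥0∞}
    (hq : ∑' x, q x ≠ ∞) (h : ∀ E : Set X, ∑' x, E.indicator p x ≤ ∑' x, E.indicator q x + d) :
    ∑' x, (p x - q x) ≤ d := by
  let T : Set X := {x | q x ≤ p x}
  have hT_ne_top : ∑' x, T.indicator q x ≠ ∞ :=
    ne_top_of_le_ne_top hq (ENNReal.tsum_le_tsum fun x => Set.indicator_le_self T q x)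
  have hT (x : X) : p x - q x + T.indicator q x = T.indicator p x := by
    by_cases hx : q x ≤ p x
    · simp [T, hx, tsub_add_cancel_of_le hx]
    · simp [T, hx, tsub_eq_zero_of_le (not_le.1 hx).le]
  refine (ENNReal.add_le_add_iff_right hT_ne_top).1 ?_
  calc ∑' x, (p x - q x) + ∑' x, T.indicator q x
      = ∑' x, T.indicator p x := by rw [← ENNReal.tsum_add, tsum_congr hT]
    _ ≤ ∑' x, T.indicator q x + d := h T
    _ = d + ∑' x, T.indicator q x := add_comm _ _

lemma tsum_mul_le_of_forall_tsum_indicator_le {X : Type*} {p q f : X → ℝ≥0∞} {d : ℝ≥0∞}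
    (hq : ∑' x, q x ≠ ∞) (h : ∀ E : Set X, ∑' x, E.indicator p x ≤ ∑' x, E.indicator q x + d)
    (hf : ∀ x, f x ≤ 1) :
    ∑' x, p x * f x ≤ ∑' x, q x * f x + d :=
  calc ∑' x, p x * f x
      ≤ ∑' x, (q x * f x + (p x - q x)) := ENNReal.tsum_le_tsum fun x =>
        calc p x * f x
            ≤ (q x + (p x - q x)) * f x := by gcongr; exact le_add_tsub
          _ = q x * f x + (p x - q x) * f x := add_mul _ _ _
          _ ≤ q x * f x + (p x - q x) := by gcongr; exact mul_le_of_le_one_right' (hf x)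
    _ = ∑' x, q x * f x + ∑' x, (p x - q x) := ENNReal.tsum_add
    _ ≤ ∑' x, q x * f x + d := by
        gcongr
        exact tsum_tsub_le_of_forall_tsum_indicator_le hq h

lemma pmf_toOuterMeasure_le_one {X : Type*} (p : PMF X) (E : Set X) : p.toOuterMeasure E ≤ 1 := by
  rw [PMF.toOuterMeasure_apply, ← p.tsum_coe]
  exact ENNReal.tsum_le_tsum fun x => Set.indicator_le_self E p x

lemma pmf_toOuterMeasure_bind_le {X Y : Type*} {c d : ℝ≥0∞} {P Q : PMF X} (hc : c ≠ ∞)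
    (h : ∀ E, P.toOuterMeasure E ≤ c * Q.toOuterMeasure E + d) (K : X → PMF Y) (E : Set Y) :
    (P.bind K).toOuterMeasure E ≤ c * (Q.bind K).toOuterMeasure E + d := by
  have hcQ : ∑' x, c * Q x ≠ ∞ := by
    rw [ENNReal.tsum_mul_left]
    exact ENNReal.mul_ne_top hc Q.tsum_coe_ne_top
  have hind (A : Set X) : ∑' x, A.indicator P x ≤ ∑' x, A.indicator (fun x => c * Q x) x + d := by
    simpa only [PMF.toOuterMeasure_apply, ← ENNReal.tsum_mul_left, Set.indicator_const_mul]
      using h A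
  simpa only [PMF.toOuterMeasure_bind_apply, ← ENNReal.tsum_mul_left, mul_assoc] using
    tsum_mul_le_of_forall_tsum_indicator_le hcQ hind fun x => pmf_toOuterMeasure_le_one (K x) E

namespace pmfIndist

variable {X : Type*} {ε δ : ℝ} {P Q : PMF X}

lemma bind {Y : Type*} (h : pmfIndist ε δ P Q) (K : X → PMF Y) :
    pmfIndist ε δ (P.bind K) (Q.bind K) := fun E =>
  ⟨pmf_toOuterMeasure_bind_le ENNReal.ofReal_ne_top (fun A => (h A).1) K E,
    pmf_toOuterMeasure_bind_le ENNReal.ofReal_ne_top (fun A => (h A).2) K E⟩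

lemma ofReal_one_sub_le_toOuterMeasure_support (h : pmfIndist ε δ P Q) (hδ : 0 ≤ δ) :
    ENNReal.ofReal (1 - δ) ≤ P.toOuterMeasure Q.support := by
  have hQ : Q.toOuterMeasure Q.supportᶜ = 0 :=
    (Q.toOuterMeasure_apply_eq_zero_iff _).2 disjoint_compl_right
  have hP : P.toOuterMeasure Q.supportᶜ ≤ ENNReal.ofReal δ := by
    simpa only [hQ, mul_zero, zero_add] using (h Q.supportᶜ).1
  rw [ENNReal.ofReal_sub _ hδ, ENNReal.ofReal_one, tsub_le_iff_right]
  calc 1 = P.toOuterMeasure (Q.support ∪ Q.supportᶜ) := by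
        rw [Set.union_compl_self, (P.toOuterMeasure_apply_eq_one_iff _).2 (Set.subset_univ _)]
    _ ≤ P.toOuterMeasure Q.support + P.toOuterMeasure Q.supportᶜ :=
        MeasureTheory.measure_union_le _ _
    _ ≤ P.toOuterMeasure Q.support + ENNReal.ofReal δ := by gcongr

end pmfIndist

section FiberCond

variable {S Z : Type*} (σ : PMF S) (F : S → Z)

open Classical in
/-- The conditional distribution of `y ∼ σ` given `F y = z`. At the outcomes `z` of probability zero
it is set to `σ`, so that `fiberCond σ F` is a probability kernel defined on all of `Z`. -/
noncomputable def fiberCond (z : Z) : PMF S :=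
  if h : ∃ y ∈ F ⁻¹' {z}, y ∈ σ.support then σ.filter (F ⁻¹' {z}) h else σ

variable {σ F} in
lemma exists_mem_fiber_of_mem_support_map {z : Z} (hz : z ∈ (σ.map F).support) :
    ∃ y ∈ F ⁻¹' {z}, y ∈ σ.support := by
  obtain ⟨y, hy, hyz⟩ := (PMF.mem_support_map_iff F σ z).1 hz
  exact ⟨y, hyz, hy⟩

lemma map_apply_eq_tsum_indicator_fiber (z : Z) :
    (σ.map F) z = ∑' y, (F ⁻¹' {z}).indicator σ y := by
  rw [← PMF.toOuterMeasure_apply_singleton, PMF.toOuterMeasure_map_apply, PMF.toOuterMeasure_apply]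

lemma map_apply_mul_fiberCond_apply (z : Z) (y : S) :
    (σ.map F) z * fiberCond σ F z y = (F ⁻¹' {z}).indicator σ y := by
  by_cases hz : z ∈ (σ.map F).support
  · have hne : ∑' y, (F ⁻¹' {z}).indicator σ y ≠ 0 := by
      rwa [← map_apply_eq_tsum_indicator_fiber]
    rw [fiberCond, dif_pos (exists_mem_fiber_of_mem_support_map hz), PMF.filter_apply,
      map_apply_eq_tsum_indicator_fiber, mul_left_comm,
      ENNReal.mul_inv_cancel hne (σ.tsum_coe_indicator_ne_top _), mul_one]
  · have h0 : (σ.map F) z = 0 := ((σ.map F).apply_eq_zero_iff z).2 hz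
    rw [h0, zero_mul]
    rw [map_apply_eq_tsum_indicator_fiber] at h0
    exact (ENNReal.tsum_eq_zero.1 h0 y).symm

lemma map_bind_fiberCond : (σ.map F).bind (fiberCond σ F) = σ := by
  ext y
  simp only [PMF.bind_apply, map_apply_mul_fiberCond_apply]
  have hne (z : Z) (hz : z ≠ F y) : (F ⁻¹' {z}).indicator σ y = 0 :=
    Set.indicator_of_notMem (s := F ⁻¹' {z}) (Ne.symm hz) σ
  rw [tsum_eq_single (F y) hne]
  exact Set.indicator_of_mem (s := F ⁻¹' {F y}) rfl σ

variable {σ F} in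
lemma fiberCond_toOuterMeasure_fiber {z : Z} (hz : z ∈ (σ.map F).support) :
    (fiberCond σ F z).toOuterMeasure (F ⁻¹' {z}) = 1 := by
  rw [PMF.toOuterMeasure_apply_eq_one_iff, fiberCond,
    dif_pos (exists_mem_fiber_of_mem_support_map hz), PMF.support_filter]
  exact Set.inter_subset_left

end FiberCond

section FiberCoupling

variable {R S Z : Type*} (ρ : PMF R) (σ : PMF S) (G : R → Z) (F : S → Z)

/-- The law of `(x, y)` where `x ∼ ρ` and `y` is drawn from `σ` conditioned on `F y = G x`.
The outputs `G x` and `F y` agree almost surely unless `G x` is a null outcome of `F`. -/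
noncomputable def fiberCoupling : PMF (R × S) :=
  ρ.bind fun x => (fiberCond σ F (G x)).map (Prod.mk x)

lemma fiberCoupling_map_fst : (fiberCoupling ρ σ G F).map Prod.fst = ρ := by
  have hconst (x : R) : (Prod.fst ∘ Prod.mk x : S → R) = Function.const S x := rfl
  simp only [fiberCoupling, PMF.map_bind, PMF.map_comp, hconst, PMF.map_const, PMF.bind_pure]

lemma fiberCoupling_map_snd :
    (fiberCoupling ρ σ G F).map Prod.snd = (ρ.map G).bind (fiberCond σ F) := by
  have hid (x : R) : (Prod.snd ∘ Prod.mk x : S → S) = id := rfl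
  simp only [fiberCoupling, PMF.map_bind, PMF.map_comp, hid, PMF.map_id, PMF.bind_map,
    Function.comp_def]

lemma map_toOuterMeasure_support_le_fiberCoupling :
    (ρ.map G).toOuterMeasure (σ.map F).support ≤
      (fiberCoupling ρ σ G F).toOuterMeasure {p | G p.1 = F p.2} := by
  have hfiber (x : R) : Prod.mk x ⁻¹' {p : R × S | G p.1 = F p.2} = F ⁻¹' {G x} :=
    Set.ext fun _ => eq_comm
  rw [PMF.toOuterMeasure_map_apply, PMF.toOuterMeasure_apply, fiberCoupling,
    PMF.toOuterMeasure_bind_apply]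
  refine ENNReal.tsum_le_tsum fun x => Set.indicator_apply_le' (fun hx => ?_) fun _ => zero_le
  rw [PMF.toOuterMeasure_map_apply, hfiber, fiberCond_toOuterMeasure_fiber hx, mul_one]

end FiberCoupling

theorem coupled_randomness_general {R S Z : Type*} {ε δ : ℝ} (hδ : 0 ≤ δ)
    (ρ : PMF R) (σ : PMF S) (G : R → Z) (F : S → Z) (h : pmfIndist ε δ (ρ.map G) (σ.map F)) :
    ∃ joint : PMF (R × S),
      joint.map Prod.fst = ρ ∧
      pmfIndist ε δ (joint.map Prod.snd) σ ∧
      ENNReal.ofReal (1 - δ) ≤ joint.toOuterMeasure {p : R × S | G p.1 = F p.2} := by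
  refine ⟨fiberCoupling ρ σ G F, fiberCoupling_map_fst ρ σ G F, ?_, ?_⟩
  · simpa only [fiberCoupling_map_snd, map_bind_fiberCond] using h.bind (fiberCond σ F)
  · exact (h.ofReal_one_sub_le_toOuterMeasure_support hδ).trans
      (map_toOuterMeasure_support_le_fiberCoupling ρ σ G F)

/-- If `M(D; R) ≈_{ε,δ} M(D'; R)` for `R ∼ ρ`, then there is a joint distribution of a pair
`(R, R')` whose first marginal is `ρ`, whose second marginal is `(ε,δ)`-indistinguishable
from `ρ`, and with `M(D; R) = M(D'; R')` with probability at least `1 − δ`. -/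
theorem coupled_randomness {R Z Input : Type*} [Countable R]
    (ε δ : ℝ) (hε : 0 ≤ ε) (hδ0 : 0 ≤ δ) (hδ1 : δ < 1)
    (ρ : PMF R) (M : Input → R → Z) (D D' : Input)
    (h : pmfIndist ε δ (ρ.map (M D)) (ρ.map (M D'))) :
    ∃ joint : PMF (R × R),
      joint.map Prod.fst = ρ ∧
      pmfIndist ε δ (joint.map Prod.snd) ρ ∧
      ENNReal.ofReal (1 - δ) ≤ joint.toOuterMeasure {p : R × R | M D p.1 = M D' p.2} :=
  coupled_randomness_general hδ0 ρ ρ (M D) (M D') h
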